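/- arXiv:1208.0446 — 2 statements merged into one kernel-verified Lean document; each statement's English description precedes it below -/
import Mathlib

section
/- Let g : ℝⁿ → ℝⁿ be convex, order-preserving and additively homogeneous with at least one harmonic vector, let C be its set of critical nodes and N = {1,…,n} ∖ C, and let u be super-harmonic with respect to g. For a vector v ∈ ℝⁿ satisfying v_i = u_i for all i ∈ C, the following are equivalent: (a) v is harmonic with respect to g; (b) the restriction v_N is a fixed point of the map h : ℝ^N → ℝ^N defined by h(y) = r_N(g(ι_N(y, u_C))). -/
open Filter Topology

/-- The subdifferential of a (convex) self-map `g` of `ℝⁿ` at `u`: the set of matrices `M`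
such that `g(x) − g(u) ≥ M(x − u)` componentwise for all `x`. -/
def Subdiff {n : ℕ} (g : (Fin n → ℝ) → (Fin n → ℝ)) (u : Fin n → ℝ) :
    Set (Matrix (Fin n) (Fin n) ℝ) :=
  {M | ∀ (x : Fin n → ℝ) (i : Fin n), g u i + M.mulVec (x - u) i ≤ g x i}

/-- `F` is a recurrence class of the matrix `M`: a (strongly connected, arc-closed)
strongly connected component of the digraph with an arc `(i,j)` whenever `M i j > 0`,
such that every row of the `F×F` submatrix of `M` sums to `1`. -/
def IsRecClass {n : ℕ} (M : Matrix (Fin n) (Fin n) ℝ) (F : Finset (Fin n)) : Prop :=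
  F.Nonempty ∧
  (∀ i ∈ F, ∀ j ∈ F, Relation.ReflTransGen (fun a b => 0 < M a b) i j) ∧
  (∀ i ∈ F, ∀ j, 0 < M i j → j ∈ F) ∧
  (∀ i ∈ F, ∑ j ∈ F, M i j = 1)

/-- `i` is a critical node of `g`: `i` belongs to a recurrence class of some matrix in the
subdifferential of `g` at some harmonic vector of `g` (this does not depend on the choice
of the harmonic vector). -/
def IsCritical {n : ℕ} (g : (Fin n → ℝ) → (Fin n → ℝ)) (i : Fin n) : Prop :=
  ∃ u₀ : Fin n → ℝ, g u₀ = u₀ ∧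
    ∃ M ∈ Subdiff g u₀, ∃ F : Finset (Fin n), IsRecClass M F ∧ i ∈ F

open Classical in
/-- `ι_N(y, u_C)`: the vector of `ℝⁿ` equal to `y` on the complement `N` of the set of
critical nodes of `g`, and to `u` on the critical nodes. -/
noncomputable def combineCrit {n : ℕ} (g : (Fin n → ℝ) → (Fin n → ℝ)) (u : Fin n → ℝ)
    (y : {i : Fin n // ¬ IsCritical g i} → ℝ) : Fin n → ℝ :=
  fun j => if hj : IsCritical g j then u j else y ⟨j, hj⟩


lemma exists_subgrad {n : ℕ} (f : (Fin n → ℝ) → ℝ) (hf : ConvexOn ℝ Set.univ f)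
    (u : Fin n → ℝ) : ∃ m : Fin n → ℝ, ∀ x, f u + ∑ j, m j * (x j - u j) ≤ f x := by
  have hc : Continuous f := hf.locallyLipschitz.continuous
  have hs1 := hf.convex_strict_epigraph
  have hs2 : IsOpen {p : (Fin n → ℝ) × ℝ | p.1 ∈ Set.univ ∧ f p.1 < p.2} := by
    have : {p : (Fin n → ℝ) × ℝ | p.1 ∈ Set.univ ∧ f p.1 < p.2} = {p | f p.1 < p.2} := by
      ext p; simp
    rw [this]
    exact isOpen_lt (hc.comp continuous_fst) continuous_snd
  obtain ⟨L, hL⟩ := geometric_hahn_banach_point_open (x := (u, f u)) hs1 hs2 (by simp)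
  set a := L (0, 1) with ha
  have hdec : ∀ x t, L (x, t) = L (x, 0) + t * a := by
    intro x t
    have : ((x, t) : (Fin n → ℝ) × ℝ) = (x, 0) + t • (0, 1) := by simp
    rw [this, map_add, map_smul, smul_eq_mul]
  have hapos : 0 < a := by
    have h := hL (u, f u + 1) (by simp)
    rw [hdec u (f u), hdec u (f u + 1)] at h
    linarith
  have key : ∀ x, L (u, 0) + f u * a ≤ L (x, 0) + f x * a := by
    intro x
    refine le_of_forall_pos_le_add fun ε hε => ?_
    have h := hL (x, f x + ε / a) (by simp; positivity)
    rw [hdec u, hdec x, add_mul, div_mul_cancel₀ _ hapos.ne'] at h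
    linarith
  let φ : (Fin n → ℝ) →ₗ[ℝ] ℝ := (L : (Fin n → ℝ) × ℝ →ₗ[ℝ] ℝ).comp (LinearMap.inl ℝ _ _)
  have hφ : ∀ x, φ x = L (x, 0) := fun x => rfl
  refine ⟨fun j => - φ (fun k => if j = k then 1 else 0) / a, fun x => ?_⟩
  have h1 : ∑ j, (- φ (fun k => if j = k then 1 else 0) / a) * (x j - u j)
      = - φ (x - u) / a := by
    rw [LinearMap.pi_apply_eq_sum_univ φ (x - u), neg_div, Finset.sum_div, ← Finset.sum_neg_distrib]
    refine Finset.sum_congr rfl fun j _ => ?_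
    simp only [Pi.sub_apply, smul_eq_mul]
    ring
  rw [h1, map_sub, hφ, hφ]
  have := key x
  rw [← sub_nonneg]
  have h2 : f x - (f u + -(L (x, 0) - L (u, 0)) / a)
      = ((L (x, 0) + f x * a) - (L (u, 0) + f u * a)) / a := by
    field_simp; ring
  rw [h2]
  exact div_nonneg (by linarith) hapos.le

lemma exists_mem_Subdiff {n : ℕ} (g : (Fin n → ℝ) → (Fin n → ℝ))
    (hconv : ∀ i, ConvexOn ℝ Set.univ (fun x => g x i)) (u : Fin n → ℝ) :
    ∃ M, M ∈ Subdiff g u := by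
  choose m hm using fun i => exists_subgrad _ (hconv i) u
  exact ⟨Matrix.of m, fun x i => by simpa [Matrix.mulVec, dotProduct] using hm i x⟩

lemma Subdiff_nonneg {n : ℕ} {g : (Fin n → ℝ) → (Fin n → ℝ)}
    (hop : ∀ x y : Fin n → ℝ, x ≤ y → g x ≤ g y) {u : Fin n → ℝ}
    {M : Matrix (Fin n) (Fin n) ℝ} (hM : M ∈ Subdiff g u) (i j : Fin n) : 0 ≤ M i j := by
  have h := hM (u - Pi.single j 1) i
  have h2 := hop (u - Pi.single j 1) u (by
    simp [Pi.single_nonneg]) i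
  have h3 : M.mulVec (u - Pi.single j 1 - u) i = - M i j := by
    rw [sub_sub_cancel_left, Matrix.mulVec_neg]; simp
  rw [h3] at h
  linarith

lemma Subdiff_sum {n : ℕ} {g : (Fin n → ℝ) → (Fin n → ℝ)}
    (hah : ∀ (lam : ℝ) (x : Fin n → ℝ), g (fun i => lam + x i) = fun i => lam + g x i)
    {u : Fin n → ℝ}
    {M : Matrix (Fin n) (Fin n) ℝ} (hM : M ∈ Subdiff g u) (i : Fin n) : ∑ j, M i j = 1 := by
  have h1 := hM (fun i => 1 + u i) i
  have h2 := hM (fun i => -1 + u i) i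
  rw [hah] at h1 h2
  simp only [Matrix.mulVec, dotProduct, Pi.sub_apply, add_sub_cancel_right, mul_one, mul_neg,
    Finset.sum_neg_distrib] at h1 h2
  linarith

/-- A nonempty closed set of states contains a recurrence class. -/
lemma exists_recClass {n : ℕ} {M : Matrix (Fin n) (Fin n) ℝ}
    (h0 : ∀ i j, 0 ≤ M i j) (h1 : ∀ i, ∑ j, M i j = 1) (A : Finset (Fin n)) (hA : A.Nonempty)
    (hcl : ∀ i ∈ A, ∀ j, 0 < M i j → j ∈ A) : ∃ F, IsRecClass M F ∧ F ⊆ A := by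
  classical
  let R : Fin n → Finset (Fin n) := fun i =>
    Finset.univ.filter (fun j => Relation.ReflTransGen (fun a b => 0 < M a b) i j)
  have hR : ∀ i j, j ∈ R i ↔ Relation.ReflTransGen (fun a b => 0 < M a b) i j := by
    intro i j; simp [R]
  obtain ⟨i, hiA, hmin⟩ := Finset.exists_min_image A (fun i => (R i).card) hA
  have hsub : R i ⊆ A := by
    intro j hj
    rw [hR] at hj
    induction hj with
    | refl => exact hiA
    | tail _ h ih => exact hcl _ ih _ h
  have hclR : ∀ a ∈ R i, ∀ b, 0 < M a b → b ∈ R i := by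
    intro a ha b hb
    rw [hR] at ha ⊢
    exact ha.tail hb
  refine ⟨R i, ⟨⟨i, (hR _ _).2 .refl⟩, ?_, hclR, ?_⟩, hsub⟩
  · intro a ha b hb
    have hs : R a ⊆ R i := by
      intro c hc
      rw [hR] at *
      exact ha.trans hc
    have := Finset.eq_of_subset_of_card_le hs (hmin a (hsub ha))
    rw [← hR, this]
    exact hb
  · intro a ha
    rw [← h1 a]
    refine Finset.sum_subset (Finset.subset_univ _) fun b _ hb => ?_
    by_contra hne
    exact hb (hclR a ha b (lt_of_le_of_ne (h0 a b) (Ne.symm hne)))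

/-- On a recurrence class, the product only involves the class. -/
lemma mulVec_recClass {n : ℕ} {M : Matrix (Fin n) (Fin n) ℝ}
    (h0 : ∀ i j, 0 ≤ M i j) {F : Finset (Fin n)} (hF : IsRecClass M F) (y : Fin n → ℝ)
    {i : Fin n} (hi : i ∈ F) : M.mulVec y i = ∑ j ∈ F, M i j * y j := by
  symm
  refine Finset.sum_subset (Finset.subset_univ _) fun b _ hb => ?_
  have : M i b = 0 := by
    by_contra hne
    exact hb (hF.2.2.1 i hi b (lt_of_le_of_ne (h0 i b) (Ne.symm hne)))
  rw [this, zero_mul]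

lemma mulVec_const_recClass {n : ℕ} {M : Matrix (Fin n) (Fin n) ℝ}
    (h0 : ∀ i j, 0 ≤ M i j) {F : Finset (Fin n)} (hF : IsRecClass M F) (y : Fin n → ℝ) (c : ℝ)
    (hy : ∀ j ∈ F, y j = c) {i : Fin n} (hi : i ∈ F) : M.mulVec y i = c := by
  rw [mulVec_recClass h0 hF y hi, Finset.sum_congr rfl fun j hj => by rw [hy j hj],
    ← Finset.sum_mul, hF.2.2.2 i hi, one_mul]

/-- A superharmonic vector is constant on a recurrence class. -/
lemma const_recClass {n : ℕ} {M : Matrix (Fin n) (Fin n) ℝ}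
    (h0 : ∀ i j, 0 ≤ M i j) {F : Finset (Fin n)} (hF : IsRecClass M F) (y : Fin n → ℝ)
    (hy : ∀ i ∈ F, M.mulVec y i ≤ y i) : ∃ c, ∀ i ∈ F, y i = c := by
  obtain ⟨k, hk, hmin⟩ := Finset.exists_min_image F y hF.1
  refine ⟨y k, fun i hi => ?_⟩
  have hpath := hF.2.1 k hk i hi
  have : i ∈ F ∧ y i = y k := by
    clear hi
    induction hpath with
    | refl => exact ⟨hk, rfl⟩
    | @tail b c _ hbc ih =>
      obtain ⟨hb, hyb⟩ := ih
      have hc := hF.2.2.1 b hb c hbc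
      refine ⟨hc, le_antisymm ?_ (hmin c hc)⟩
      have h := hy b hb
      rw [mulVec_recClass h0 hF y hb, hyb] at h
      have h2 : ∑ j ∈ F, M b j * (y j - y k) ≤ 0 := by
        simp only [mul_sub, Finset.sum_sub_distrib, ← Finset.sum_mul, hF.2.2.2 b hb]
        linarith
      have h3 : M b c * (y c - y k) ≤ ∑ j ∈ F, M b j * (y j - y k) :=
        Finset.single_le_sum (f := fun j => M b j * (y j - y k))
          (fun j hj => mul_nonneg (h0 b j) (sub_nonneg.2 (hmin j hj))) hc
      by_contra hlt
      have := mul_pos hbc (sub_pos.2 (not_le.1 hlt))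
      linarith
  exact this.2

/-- Comparison principle. -/
lemma le_of_le_on_crit {n : ℕ} {g : (Fin n → ℝ) → (Fin n → ℝ)}
    (hconv : ∀ i, ConvexOn ℝ Set.univ (fun x => g x i))
    (hop : ∀ x y : Fin n → ℝ, x ≤ y → g x ≤ g y)
    (hah : ∀ (lam : ℝ) (x : Fin n → ℝ), g (fun i => lam + x i) = fun i => lam + g x i)
    {u₀ : Fin n → ℝ} (hu₀ : g u₀ = u₀) {u v : Fin n → ℝ} (hu : g u ≤ u) (hv : v ≤ g v)
    (hC : ∀ i, IsCritical g i → v i ≤ u i) : v ≤ u := by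
  classical
  intro i₀
  by_contra hlt
  obtain ⟨k, -, hmax⟩ := Finset.exists_max_image Finset.univ (fun i => v i - u i) ⟨i₀, by simp⟩
  simp only [Finset.mem_univ, true_implies] at hmax
  have hkpos : 0 < v k - u k := lt_of_lt_of_le (by linarith) (hmax i₀)
  obtain ⟨P, hP⟩ := exists_mem_Subdiff g hconv v
  have h0 := Subdiff_nonneg hop hP
  have h1 := Subdiff_sum hah hP
  have hcl : ∀ i ∈ Finset.univ.filter (fun i => v i - u i = v k - u k), ∀ j, 0 < P i j →
      j ∈ Finset.univ.filter (fun i => v i - u i = v k - u k) := by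
    intro i hi j hij
    simp only [Finset.mem_filter, Finset.mem_univ, true_and] at hi ⊢
    refine le_antisymm (hmax j) ?_
    have h := hP u i
    have hui := hu i
    have hvi := hv i
    have h2 : ∑ j, P i j * ((v k - u k) - (v j - u j)) ≤ 0 := by
      have e : ∑ j, P i j * ((v k - u k) - (v j - u j)) = (v k - u k) + P.mulVec (u - v) i := by
        simp only [mul_sub (P i _) (v k - u k), Finset.sum_sub_distrib, ← Finset.sum_mul, h1 i,
          Matrix.mulVec, dotProduct, Pi.sub_apply, one_mul]
        rw [sub_eq_add_neg, ← Finset.sum_neg_distrib]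
        congr 1
        exact Finset.sum_congr rfl fun j _ => by ring
      rw [e]; linarith
    have h3 := Finset.single_le_sum (f := fun j => P i j * ((v k - u k) - (v j - u j)))
          (fun j _ => mul_nonneg (h0 i j) (sub_nonneg.2 (hmax j))) (Finset.mem_univ j)
    by_contra hlt
    have := mul_pos hij (sub_pos.2 (not_le.1 hlt))
    linarith
  obtain ⟨F, hF, hFA⟩ := exists_recClass h0 h1 _ ⟨k, by simp⟩ hcl
  have hFA' : ∀ i ∈ F, v i - u i = v k - u k := fun i hi => by simpa using hFA hi
  -- the rows of `P` in `F` are subgradients at `u₀`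
  obtain ⟨c, hc⟩ := const_recClass h0 hF (u₀ - v) (by
    intro i hi
    have h := hP u₀ i
    have hvi := hv i
    rw [hu₀] at h
    simp only [Pi.sub_apply]
    linarith)
  obtain ⟨Q, hQ⟩ := exists_mem_Subdiff g hconv u₀
  let M : Matrix (Fin n) (Fin n) ℝ := fun i => if i ∈ F then P i else Q i
  have hMF : ∀ i ∈ F, M i = P i := fun i hi => if_pos hi
  have hM : M ∈ Subdiff g u₀ := by
    intro x i
    by_cases hi : i ∈ F
    · have e : M.mulVec (x - u₀) i = P.mulVec (x - u₀) i := by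
        simp only [Matrix.mulVec, hMF i hi]
      have e2 : P.mulVec (x - v) i = P.mulVec (x - u₀) i + c := by
        rw [← mulVec_const_recClass h0 hF (u₀ - v) c hc hi, ← Pi.add_apply, ← Matrix.mulVec_add,
          sub_add_sub_cancel]
      have h := hP x i
      have hvi := hv i
      have hci := hc i hi
      simp only [Pi.sub_apply] at hci
      rw [e, hu₀]
      linarith
    · have e : M.mulVec (x - u₀) i = Q.mulVec (x - u₀) i := by
        simp only [Matrix.mulVec, M, if_neg hi]
      rw [e]
      exact hQ x i
  have hFM : IsRecClass M F := by
    obtain ⟨a, b, c, d⟩ := hF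
    refine ⟨a, ?_, ?_, ?_⟩
    · intro i hi j hj
      have := b i hi j hj
      have aux : j ∈ F ∧ Relation.ReflTransGen (fun a b => 0 < M a b) i j := by
        clear hj
        induction this with
        | refl => exact ⟨hi, .refl⟩
        | @tail p q _ hpq ih =>
          exact ⟨c p ih.1 q hpq, ih.2.tail (by rw [hMF p ih.1]; exact hpq)⟩
      exact aux.2
    · intro i hi j hij
      rw [hMF i hi] at hij
      exact c i hi j hij
    · intro i hi
      rw [hMF i hi]
      exact d i hi
  obtain ⟨f, hf⟩ := hF.1
  have h2 := hC f ⟨u₀, hu₀, M, hM, F, hFM, hf⟩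
  have h3 := hFA' f hf
  linarith

/-- Let `g : ℝⁿ → ℝⁿ` be convex, order-preserving and additively
homogeneous with at least one harmonic vector, let `C` be its set of critical nodes and
`N` its complement, and let `u` be super-harmonic.  For a vector `v` coinciding with `u`
on `C`, `v` is harmonic with respect to `g` if and only if the restriction `v_N` is a
fixed point of `h : ℝ^N → ℝ^N`, `h(y) = r_N (g (ι_N(y, u_C)))`. -/
theorem harmonic_iff_restriction_fixedPoint
    (n : ℕ) (g : (Fin n → ℝ) → (Fin n → ℝ))
    (hconv : ∀ i, ConvexOn ℝ Set.univ (fun x => g x i))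
    (hop : ∀ x y : Fin n → ℝ, x ≤ y → g x ≤ g y)
    (hah : ∀ (lam : ℝ) (x : Fin n → ℝ), g (fun i => lam + x i) = fun i => lam + g x i)
    (u₀ : Fin n → ℝ) (hu₀ : g u₀ = u₀)
    (u : Fin n → ℝ) (hu : g u ≤ u)
    (v : Fin n → ℝ) (hvC : ∀ i : Fin n, IsCritical g i → v i = u i) :
    g v = v ↔
      (fun i : {i : Fin n // ¬ IsCritical g i} =>
          g (combineCrit g u (fun j => v j.1)) i.1) = fun i => v i.1 := by
  have hcomb : combineCrit g u (fun j => v j.1) = v := by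
    funext j
    unfold combineCrit
    split_ifs with hj
    · exact (hvC j hj).symm
    · rfl
  rw [hcomb]
  constructor
  · intro h
    funext i
    exact congrFun h i.1
  · intro h
    have hN : ∀ i, ¬ IsCritical g i → g v i = v i := fun i hi => congrFun h ⟨i, hi⟩
    have hsub : v ≤ g v := by
      intro i
      by_cases hi : IsCritical g i
      · obtain ⟨w, hw, M, hM, F, hF, hiF⟩ := id hi
        have h0 := Subdiff_nonneg hop hM
        have hvF : ∀ j ∈ F, v j = u j := fun j hj => hvC j ⟨w, hw, M, hM, F, hF, hj⟩
        obtain ⟨c, hc⟩ := const_recClass h0 hF (u - w) (by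
          intro j _
          have h1 := hM u j
          have h2 := hu j
          rw [hw] at h1
          simp only [Pi.sub_apply]
          linarith)
        have hcv : ∀ j ∈ F, (v - w) j = c := by
          intro j hj
          rw [← hc j hj, Pi.sub_apply, Pi.sub_apply, hvF j hj]
        have h1 := hM v i
        rw [mulVec_const_recClass h0 hF (v - w) c hcv hiF, hw, ← hcv i hiF, Pi.sub_apply] at h1
        linarith
      · exact (hN i hi).ge
    have hle : v ≤ u := le_of_le_on_crit hconv hop hah hu₀ hu hsub (fun i hi => (hvC i hi).le)
    funext i
    by_cases hi : IsCritical g i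
    · refine le_antisymm ?_ (hsub i)
      rw [hvC i hi]
      exact (hop v u hle i).trans (hu i)
    · exact hN i hi
end

section
/- Let g : ℝⁿ → ℝⁿ be polyhedral, convex, order-preserving and additively homogeneous, let η = χ(g) be its cycle time (which exists), and let w : t ↦ tη + v be a super-invariant half-line of g. Define ḡ : ℝⁿ → ℝⁿ by ḡ(y) = lim_{t→∞} (g(tη + y) − (t+1)η) (this limit exists), and let C be the set of critical nodes of ḡ. Then there exists a unique invariant half-line of g that coincides with w on C for all large t, namely t ↦ tη + z where z = lim_{k→∞} ḡ^k(v); that is, z is the unique vector such that t ↦ tη + z is invariant under g and z_i = v_i for all i ∈ C. -/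
open Filter Topology

/-- `g : ℝⁿ → ℝⁿ` is polyhedral: there is a covering of `ℝⁿ` by finitely many convex
polyhedra (finite intersections of half-spaces) on each of which `g` is affine. -/
def IsPolyhedralMap {n : ℕ} (g : (Fin n → ℝ) → (Fin n → ℝ)) : Prop :=
  ∃ (m : ℕ) (C : Fin m → Set (Fin n → ℝ)),
    (⋃ k, C k) = Set.univ ∧
    ∀ k : Fin m,
      (∃ (p : ℕ) (a : Fin p → Fin n → ℝ) (b : Fin p → ℝ),
        C k = {x | ∀ l, ∑ j, a l j * x j ≤ b l}) ∧
      ∃ (A : Matrix (Fin n) (Fin n) ℝ) (c : Fin n → ℝ),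
        ∀ x ∈ C k, g x = fun i => (∑ j, A i j * x j) + c i


lemma aux_lip {n : ℕ} {h : (Fin n → ℝ) → (Fin n → ℝ)}
    (hop : ∀ x y : Fin n → ℝ, x ≤ y → h x ≤ h y)
    (hah : ∀ (lam : ℝ) (x : Fin n → ℝ), h (fun i => lam + x i) = fun i => lam + h x i) :
    LipschitzWith 1 h := by
  have key : ∀ x y : Fin n → ℝ, ∀ i, h x i ≤ dist x y + h y i := by
    intro x y i
    have h1 : x ≤ fun i => dist x y + y i := by
      intro j
      have := dist_le_pi_dist x y j
      rw [Real.dist_eq] at this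
      have := (abs_le.1 this).2
      show x j ≤ dist x y + y j
      linarith
    have := hop _ _ h1 i
    rwa [hah] at this
  apply LipschitzWith.of_dist_le_mul
  intro x y
  rw [NNReal.coe_one, one_mul, dist_pi_le_iff dist_nonneg]
  intro i
  rw [Real.dist_eq, abs_le]
  have h1 := key x y i
  have h2 := key y x i
  rw [dist_comm] at h2
  constructor <;> linarith

lemma aux_subgrad {n : ℕ} (φ : (Fin n → ℝ) → ℝ) (hc : Continuous φ)
    (hconv : ConvexOn ℝ Set.univ φ) (u : Fin n → ℝ) :
    ∃ m : Fin n → ℝ, ∀ x, φ u + ∑ j, m j * (x j - u j) ≤ φ x := by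
  have hs : Convex ℝ {p : (Fin n → ℝ) × ℝ | p.1 ∈ Set.univ ∧ φ p.1 < p.2} :=
    hconv.convex_strict_epigraph
  have ho : IsOpen {p : (Fin n → ℝ) × ℝ | p.1 ∈ Set.univ ∧ φ p.1 < p.2} := by
    simp only [Set.mem_univ, true_and]
    exact isOpen_lt (hc.comp continuous_fst) continuous_snd
  obtain ⟨f, hf⟩ := geometric_hahn_banach_point_open (x := (u, φ u)) hs ho (by simp)
  have hlin : ∀ (x : Fin n → ℝ) (s : ℝ),
      f (x, s) = (∑ j, x j * f (Pi.single j 1, 0)) + s * f (0, 1) := by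
    intro x s
    have e1 : ((x, s) : (Fin n → ℝ) × ℝ) =
        ∑ j, x j • ((Pi.single j 1, 0) : (Fin n → ℝ) × ℝ) + s • ((0, 1) : (Fin n → ℝ) × ℝ) := by
      ext k
      · simp [Prod.fst_sum, Finset.sum_apply, Pi.single_apply]
      · simp [Prod.snd_sum]
    conv_lhs => rw [e1]
    simp only [map_add, map_sum, map_smul, smul_eq_mul]
  have hb : 0 < f (0, 1) := by
    have := hf (u, φ u + 1) (by simp)
    rw [hlin, hlin u (φ u + 1)] at this
    linarith
  refine ⟨fun j => - f (Pi.single j 1, 0) / f (0, 1), fun x => ?_⟩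
  apply le_of_forall_gt
  intro s hs
  have := hf (x, s) (by simpa using hs)
  rw [hlin, hlin x s] at this
  have e : ∑ j, - f (Pi.single j 1, 0) / f (0, 1) * (x j - u j)
      = ((∑ j, u j * f (Pi.single j 1, 0)) - ∑ j, x j * f (Pi.single j 1, 0)) / f (0, 1) := by
    rw [← Finset.sum_sub_distrib, Finset.sum_div]
    apply Finset.sum_congr rfl
    intro j _
    ring
  rw [e, ← lt_sub_iff_add_lt', div_lt_iff₀ hb]
  linarith

lemma aux_exists_subdiff {n : ℕ} {h : (Fin n → ℝ) → (Fin n → ℝ)} (hc : Continuous h)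
    (hconv : ∀ i, ConvexOn ℝ Set.univ (fun x => h x i)) (u : Fin n → ℝ) :
    ∃ M, M ∈ Subdiff h u := by
  choose m hm using fun i => aux_subgrad (fun x => h x i)
    ((continuous_apply i).comp hc) (hconv i) u
  refine ⟨fun i j => m i j, fun x i => ?_⟩
  exact hm i x

lemma aux_stoch {n : ℕ} {h : (Fin n → ℝ) → (Fin n → ℝ)}
    (hop : ∀ x y : Fin n → ℝ, x ≤ y → h x ≤ h y)
    (hah : ∀ (lam : ℝ) (x : Fin n → ℝ), h (fun i => lam + x i) = fun i => lam + h x i)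
    {u : Fin n → ℝ} {M : Matrix (Fin n) (Fin n) ℝ} (hM : M ∈ Subdiff h u) :
    (∀ i j, 0 ≤ M i j) ∧ ∀ i, ∑ j, M i j = 1 := by
  constructor
  · intro i j
    have h1 := hM (u - Pi.single j 1) i
    have h2 := hop (u - Pi.single j 1) u (by
      rw [sub_le_self_iff]
      intro k
      by_cases hk : k = j
      · subst hk; simp
      · simp [hk]) i
    have e : u - Pi.single j 1 - u = - Pi.single j (1 : ℝ) := by abel
    rw [e, Matrix.mulVec_neg] at h1
    simp at h1
    linarith
  · intro i
    have h1 := hM (fun k => 1 + u k) i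
    have h2 := hM (fun k => (-1) + u k) i
    rw [hah] at h1 h2
    have e1 : (fun k => 1 + u k) - u = fun _ => 1 := by ext k; simp
    have e2 : (fun k => -1 + u k) - u = fun _ => -1 := by ext k; simp
    rw [e1] at h1
    rw [e2] at h2
    simp only [Matrix.mulVec, dotProduct, mul_one, mul_neg, Finset.sum_neg_distrib] at h1 h2
    linarith

lemma aux_row {n : ℕ} {M : Matrix (Fin n) (Fin n) ℝ} (h0 : ∀ i j, 0 ≤ M i j)
    (h1 : ∀ i, ∑ j, M i j = 1) (f : Fin n → ℝ) (c : ℝ) (i : Fin n)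
    (hsup : ∀ j, 0 < M i j → c ≤ f j) (hle : ∑ j, M i j * f j ≤ c) :
    ∀ j, 0 < M i j → f j = c := by
  have hnn : ∀ j ∈ Finset.univ, 0 ≤ M i j * (f j - c) := by
    intro j _
    rcases (h0 i j).eq_or_lt with h | h
    · rw [← h]; simp
    · exact mul_nonneg h.le (sub_nonneg.2 (hsup j h))
  have hs : ∑ j, M i j * (f j - c) = 0 := by
    apply le_antisymm _ (Finset.sum_nonneg hnn)
    simp only [mul_sub, Finset.sum_sub_distrib, ← Finset.sum_mul, h1]
    linarith
  intro j hj
  have := (Finset.sum_eq_zero_iff_of_nonneg hnn).1 hs j (Finset.mem_univ _)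
  rcases mul_eq_zero.1 this with h | h
  · exact absurd h hj.ne'
  · linarith

lemma aux_crit {n : ℕ} {h : (Fin n → ℝ) → (Fin n → ℝ)}
    (hop : ∀ x y : Fin n → ℝ, x ≤ y → h x ≤ h y)
    (hah : ∀ (lam : ℝ) (x : Fin n → ℝ), h (fun i => lam + x i) = fun i => lam + h x i)
    {v : Fin n → ℝ} (hv : h v ≤ v) {i : Fin n} (hi : IsCritical h i) : h v i = v i := by
  obtain ⟨u, hu, M, hM, F, ⟨hne, hconn, hcl, -⟩, hiF⟩ := hi
  obtain ⟨h0, h1⟩ := aux_stoch hop hah hM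
  obtain ⟨m, hmF, hmin⟩ := F.exists_min_image (fun j => v j - u j) hne
  have hge : ∀ k, u k + ∑ j, M k j * (v j - u j) ≤ h v k := by
    intro k
    have := hM v k
    rw [hu] at this
    exact this
  set c := v m - u m with hc
  have hconst : ∀ j, Relation.ReflTransGen (fun a b => 0 < M a b) m j → j ∈ F ∧ v j - u j = c := by
    intro j hj
    induction hj with
    | refl => exact ⟨hmF, rfl⟩
    | tail _ hab ih =>
      rename_i a b _
      refine ⟨hcl _ ih.1 _ hab, ?_⟩
      refine aux_row h0 h1 (fun j => v j - u j) c a (fun j hj => hmin j (hcl _ ih.1 _ hj)) ?_ b hab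
      have := hge a
      have h3 := hv a
      have := ih.2
      linarith
  apply le_antisymm (hv i)
  have e : ∑ j, M i j * (v j - u j) = c := by
    have : ∀ j ∈ Finset.univ, M i j * (v j - u j) = M i j * c := by
      intro j _
      rcases (h0 i j).eq_or_lt with h | h
      · rw [← h]; simp
      · rw [(hconst j (hconn _ hmF _ (hcl _ hiF _ h))).2]
    rw [Finset.sum_congr rfl this, ← Finset.sum_mul, h1, one_mul]
  have := hge i
  rw [e] at this
  have := (hconst i (hconn _ hmF _ hiF)).2
  linarith

lemma aux_recclass {n : ℕ} {M : Matrix (Fin n) (Fin n) ℝ} (h0 : ∀ i j, 0 ≤ M i j)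
    (h1 : ∀ i, ∑ j, M i j = 1) (S : Finset (Fin n)) (hS : S.Nonempty)
    (hcl : ∀ i ∈ S, ∀ j, 0 < M i j → j ∈ S) : ∃ F ⊆ S, IsRecClass M F := by
  classical
  let R : Fin n → Finset (Fin n) := fun i =>
    Finset.univ.filter (fun j => Relation.ReflTransGen (fun a b => 0 < M a b) i j)
  have hR : ∀ i j, j ∈ R i ↔ Relation.ReflTransGen (fun a b => 0 < M a b) i j := by
    intro i j; simp [R]
  obtain ⟨i, hiS, hmin⟩ := S.exists_min_image (fun j => (R j).card) hS
  have hsub : R i ⊆ S := by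
    intro j hj
    rw [hR] at hj
    induction hj with
    | refl => exact hiS
    | tail _ hab ih => exact hcl _ ih _ hab
  have hback : ∀ j ∈ R i, R j = R i := by
    intro j hj
    apply Finset.eq_of_subset_of_card_le
    · intro k hk
      rw [hR] at hk hj ⊢
      exact hj.trans hk
    · exact hmin j (hsub hj)
  have hRcl : ∀ a ∈ R i, ∀ b, 0 < M a b → b ∈ R i := by
    intro a ha b hab
    rw [hR] at ha ⊢
    exact ha.tail hab
  refine ⟨R i, hsub, ⟨i, (hR i i).2 .refl⟩, ?_, hRcl, ?_⟩
  · intro a ha b hb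
    rw [← hR, hback a ha]; exact hb
  · intro a ha
    rw [← h1 a]
    apply Finset.sum_subset (Finset.subset_univ _)
    intro b _ hb
    rcases (h0 a b).eq_or_lt with h | h
    · exact h.symm
    · exact absurd (hRcl a ha b h) hb

lemma aux_unique {n : ℕ} {h : (Fin n → ℝ) → (Fin n → ℝ)}
    (hop : ∀ x y : Fin n → ℝ, x ≤ y → h x ≤ h y)
    (hah : ∀ (lam : ℝ) (x : Fin n → ℝ), h (fun i => lam + x i) = fun i => lam + h x i)
    (hconv : ∀ i, ConvexOn ℝ Set.univ (fun x => h x i))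
    {z z' : Fin n → ℝ} (hz : h z = z) (hz' : h z' = z')
    (heq : ∀ i, IsCritical h i → z' i = z i) : z' ≤ z := by
  rcases isEmpty_or_nonempty (Fin n) with hE | hE
  · intro i; exact (hE.false i).elim
  obtain ⟨M, hM⟩ := aux_exists_subdiff (aux_lip hop hah).continuous hconv z'
  obtain ⟨h0, h1⟩ := aux_stoch hop hah hM
  obtain ⟨m, -, hmin⟩ := Finset.univ.exists_min_image (fun j => z j - z' j) Finset.univ_nonempty
  set c := z m - z' m with hc
  have hge : ∀ k, z' k + ∑ j, M k j * (z j - z' j) ≤ z k := by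
    intro k
    have := hM z k
    rw [hz, hz'] at this
    exact this
  obtain ⟨F, hFS, hF⟩ := aux_recclass h0 h1 (Finset.univ.filter (fun j => z j - z' j = c))
    ⟨m, by simp [hc]⟩ (by
      intro i hi j hij
      simp only [Finset.mem_filter, Finset.mem_univ, true_and] at hi ⊢
      refine aux_row h0 h1 (fun j => z j - z' j) c i (fun j _ => hmin j (Finset.mem_univ _)) ?_ j hij
      have := hge i
      linarith)
  obtain ⟨k, hk⟩ := hF.1
  have hkc : IsCritical h k := ⟨z', hz', M, hM, F, hF, hk⟩
  have h2 := hFS hk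
  simp only [Finset.mem_filter, Finset.mem_univ, true_and] at h2
  have h3 := heq k hkc
  intro i
  have h4 : c ≤ z i - z' i := hmin i (Finset.mem_univ _)
  linarith

lemma aux_line {n : ℕ} {g : (Fin n → ℝ) → (Fin n → ℝ)} (hpoly : IsPolyhedralMap g)
    (a b : Fin n → ℝ) : ∃ (p q : Fin n → ℝ) (T : ℝ), ∀ t ≥ T,
      g (fun i => t * a i + b i) = fun i => t * p i + q i := by
  obtain ⟨m, C, hcov, hC⟩ := hpoly
  have hex : ∃ k, ∀ T : ℝ, ∃ t ≥ T, (fun i => t * a i + b i) ∈ C k := by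
    by_contra! hcon
    choose T hT using hcon
    obtain ⟨B, hB⟩ := (Set.finite_range T).bddAbove
    have : (fun i => B * a i + b i) ∈ ⋃ k, C k := by rw [hcov]; trivial
    obtain ⟨k, hk⟩ := Set.mem_iUnion.1 this
    exact hT k B (hB ⟨k, rfl⟩) hk
  obtain ⟨k, hk⟩ := hex
  obtain ⟨⟨p, α, β, hCk⟩, A, c, hA⟩ := hC k
  obtain ⟨T, -, hT⟩ := hk 0
  refine ⟨fun i => ∑ j, A i j * a j, fun i => (∑ j, A i j * b j) + c i, T, fun t ht => ?_⟩
  obtain ⟨s, hs, hsC⟩ := hk t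
  have hmem : (fun i => t * a i + b i) ∈ C k := by
    rw [hCk] at hT hsC ⊢
    intro l
    have e : ∀ r : ℝ, ∑ j, α l j * (r * a j + b j) =
        r * (∑ j, α l j * a j) + ∑ j, α l j * b j := by
      intro r
      rw [Finset.mul_sum, ← Finset.sum_add_distrib]
      exact Finset.sum_congr rfl fun j _ => by ring
    have h1 := hT l
    have h2 := hsC l
    simp only [e] at h1 h2 ⊢
    rcases le_total 0 (∑ j, α l j * a j) with h | h
    · have := mul_le_mul_of_nonneg_right hs h
      linarith
    · have := mul_le_mul_of_nonpos_right ht h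
      linarith
  rw [hA _ hmem]
  ext i
  simp only [mul_add, Finset.sum_add_distrib, Finset.mul_sum, ← add_assoc]
  congr 2
  exact Finset.sum_congr rfl fun j _ => by ring

/-- a rational function bounded along a sequence tending to `0` has a first order expansion. -/
lemma aux_rational (p q : Polynomial ℝ) (hq : q ≠ 0) (s : ℕ → ℝ) (hs : Tendsto s atTop (𝓝 0))
    (hs0 : ∀ j, s j ≠ 0) (y : ℕ → ℝ) (hy : ∀ j, q.eval (s j) * y j = p.eval (s j))
    (hqs : ∀ j, q.eval (s j) ≠ 0)
    (B : ℝ) (hB : ∀ j, |y j| ≤ B) :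
    ∃ a b : ℝ, Tendsto (fun j => (y j - a) / s j - b) atTop (𝓝 0) := by
  classical
  have hg : GCDMonoid.gcd p q ≠ 0 := gcd_ne_zero_of_right hq
  have hcop := isCoprime_div_gcd_div_gcd (p := p) hq
  have hp1 : GCDMonoid.gcd p q * (p / GCDMonoid.gcd p q) = p :=
    EuclideanDomain.mul_div_cancel' hg (gcd_dvd_left _ _)
  have hq1 : GCDMonoid.gcd p q * (q / GCDMonoid.gcd p q) = q :=
    EuclideanDomain.mul_div_cancel' hg (gcd_dvd_right _ _)
  set d := GCDMonoid.gcd p q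
  set P := p / d
  set Q := q / d
  have hQs : ∀ j, Q.eval (s j) ≠ 0 := by
    intro j h
    apply hqs j
    rw [← hq1, Polynomial.eval_mul, h, mul_zero]
  have hds : ∀ j, d.eval (s j) ≠ 0 := by
    intro j h
    apply hqs j
    rw [← hq1, Polynomial.eval_mul, h, zero_mul]
  have hPQ : ∀ j, Q.eval (s j) * y j = P.eval (s j) := by
    intro j
    have := hy j
    rw [← hq1, ← hp1, Polynomial.eval_mul, Polynomial.eval_mul, mul_assoc] at this
    exact mul_left_cancel₀ (hds j) this
  have hlim : ∀ R : Polynomial ℝ, Tendsto (fun j => R.eval (s j)) atTop (𝓝 (R.eval 0)) :=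
    fun R => (R.continuous.tendsto 0).comp hs
  have hQ0 : Q.eval 0 ≠ 0 := by
    intro h0
    have h1 : Tendsto (fun j => Q.eval (s j) * y j) atTop (𝓝 0) := by
      have := hlim Q
      rw [h0] at this
      have h2 : Tendsto (fun j => |Q.eval (s j)| * B) atTop (𝓝 0) := by
        simpa using this.abs.mul_const B
      refine squeeze_zero_norm (fun j => ?_) h2
      rw [Real.norm_eq_abs, abs_mul]
      exact mul_le_mul_of_nonneg_left (hB j) (abs_nonneg _)
    simp only [hPQ] at h1
    have hP0 : P.eval 0 = 0 := tendsto_nhds_unique (hlim P) h1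
    obtain ⟨u, w, huw⟩ := hcop
    have := congrArg (Polynomial.eval 0) huw
    simp [hP0, h0] at this
  obtain ⟨D, hder⟩ : ∃ D, HasDerivAt (fun x => P.eval x / Q.eval x) D 0 :=
    ⟨_, (P.hasDerivAt 0).div (Q.hasDerivAt 0) hQ0⟩
  refine ⟨P.eval 0 / Q.eval 0, D, ?_⟩
  have h1 := hder.tendsto_slope
  have h2 : Tendsto s atTop (𝓝[≠] 0) :=
    tendsto_nhdsWithin_iff.2 ⟨hs, Eventually.of_forall hs0⟩
  have h3 := (h1.comp h2).sub_const D
  rw [sub_self] at h3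
  refine h3.congr fun j => ?_
  have : y j = P.eval (s j) / Q.eval (s j) := by
    rw [eq_div_iff (hQs j), mul_comm]; exact hPQ j
  simp only [Function.comp, slope_def_field, sub_zero, this]

/-- discounted fixed points -/
lemma aux_discount {n : ℕ} {g : (Fin n → ℝ) → (Fin n → ℝ)} (hg : LipschitzWith 1 g)
    (s : ℝ) (hs : 0 < s) (hs1 : s < 1) :
    ∃ x : Fin n → ℝ, g ((1 - s) • x) = x ∧ ∀ i, |s * x i| ≤ ‖g 0‖ := by
  have hd : ∀ x y, dist (g x) (g y) ≤ dist x y := fun x y => by simpa using hg.dist_le_mul x y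
  have hcw : ContractingWith ⟨1 - s, by linarith⟩ (fun x => g ((1 - s) • x)) := by
    refine ⟨?_, LipschitzWith.of_dist_le_mul fun x y => ?_⟩
    · apply NNReal.coe_lt_coe.1
      show 1 - s < 1
      linarith
    · refine (hd _ _).trans ?_
      rw [dist_smul₀, Real.norm_of_nonneg (by linarith)]
      exact le_rfl
  refine ⟨hcw.fixedPoint, hcw.fixedPoint_isFixedPt, fun i => ?_⟩
  have hfix : g ((1 - s) • hcw.fixedPoint) = hcw.fixedPoint := hcw.fixedPoint_isFixedPt
  set x := hcw.fixedPoint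
  have h1 : ‖x - g 0‖ ≤ (1 - s) * ‖x‖ := by
    have := hd ((1 - s) • x) 0
    rw [hfix, dist_eq_norm, dist_eq_norm, sub_zero, norm_smul,
      Real.norm_of_nonneg (by linarith)] at this
    exact this
  have h2 : ‖x‖ ≤ ‖x - g 0‖ + ‖g 0‖ := by
    simpa using norm_add_le (x - g 0) (g 0)
  have h3 : |x i| ≤ ‖x‖ := by simpa using norm_le_pi_norm x i
  rw [abs_mul, abs_of_pos hs]
  have := mul_le_mul_of_nonneg_left h3 hs.le
  linarith

lemma aux_cramer {n : ℕ} (A : Matrix (Fin n) (Fin n) ℝ) (c : Fin n → ℝ) :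
    ∃ (q : Polynomial ℝ) (p : Fin n → Polynomial ℝ), q ≠ 0 ∧
      ∀ (s : ℝ) (x : Fin n → ℝ), x = (1 - s) • A.mulVec x + c →
        ∀ i, q.eval s * (s * x i) = (p i).eval s := by
  classical
  let N : Matrix (Fin n) (Fin n) (Polynomial ℝ) :=
    1 - (1 - Polynomial.X : Polynomial ℝ) • A.map Polynomial.C
  have hN : ∀ s : ℝ, (Polynomial.evalRingHom s).mapMatrix N = 1 - (1 - s) • A := by
    intro s
    ext i j
    by_cases h : i = j
    · subst h; simp [N]
    · simp [N, Matrix.one_apply_ne h]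
  refine ⟨N.det, fun i => Polynomial.X * N.adjugate.mulVec (fun j => Polynomial.C (c j)) i, ?_, ?_⟩
  · intro h
    have h1 := (Polynomial.evalRingHom (1 : ℝ)).map_det N
    rw [hN, h] at h1
    simp at h1
  · intro s x hx i
    have h1 := (Polynomial.evalRingHom s).map_det N
    have h2 := (Polynomial.evalRingHom s).map_adjugate N
    rw [hN] at h1 h2
    have h3 : (1 - (1 - s) • A).mulVec x = c := by
      rw [Matrix.sub_mulVec, Matrix.one_mulVec, Matrix.smul_mulVec]
      nth_rewrite 1 [hx]
      simp
    have h4 : (1 - (1 - s) • A).det • x = (1 - (1 - s) • A).adjugate.mulVec c := by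
      conv_rhs => rw [← h3]
      rw [Matrix.mulVec_mulVec, Matrix.adjugate_mul, Matrix.smul_mulVec, Matrix.one_mulVec]
    have h5 : N.det.eval s = (1 - (1 - s) • A).det := h1
    have h6 : (N.adjugate.mulVec (fun j => Polynomial.C (c j)) i).eval s
        = (1 - (1 - s) • A).adjugate.mulVec c i := by
      rw [← h2]
      simp [Matrix.mulVec, dotProduct, Polynomial.eval_finsetSum]
    have h7 := congrFun h4 i
    simp only [Pi.smul_apply, smul_eq_mul] at h7
    rw [Polynomial.eval_mul, Polynomial.eval_X, h6, ← h7, h5]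
    ring

/-- Kohlberg's theorem: existence of an invariant half-line. -/
lemma aux_kohlberg {n : ℕ} {g : (Fin n → ℝ) → (Fin n → ℝ)} (hpoly : IsPolyhedralMap g)
    (hg : LipschitzWith 1 g) : ∃ (a u : Fin n → ℝ) (T : ℝ), ∀ t ≥ T,
      g (fun i => t * a i + u i) = fun i => (t + 1) * a i + u i := by
  have hpoly' := hpoly
  obtain ⟨m, C, hcov, hC⟩ := hpoly'
  let s₀ : ℕ → ℝ := fun j => 1 / ((j : ℝ) + 1 + 1)
  have hs₀ : Tendsto s₀ atTop (𝓝 0) :=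
    (tendsto_add_atTop_iff_nat 1).2 tendsto_one_div_add_atTop_nhds_zero_nat |>.congr
      (fun j => by simp [s₀])
  have hpos₀ : ∀ j, 0 < s₀ j := fun j => by positivity
  have hlt₀ : ∀ j, s₀ j < 1 := fun j => by
    rw [div_lt_one (by positivity)]
    have : (0 : ℝ) ≤ j := by positivity
    linarith
  choose x₀ hx₀ hbd₀ using fun j => aux_discount hg (s₀ j) (hpos₀ j) (hlt₀ j)
  have hex : ∃ k, ∃ᶠ j in atTop, (1 - s₀ j) • x₀ j ∈ C k := by
    by_contra! hcon
    have : ∀ᶠ j in atTop, ∀ k, ¬ (1 - s₀ j) • x₀ j ∈ C k :=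
      eventually_all.2 fun k => hcon k
    obtain ⟨j, hj⟩ := this.exists
    have : (1 - s₀ j) • x₀ j ∈ ⋃ k, C k := by rw [hcov]; trivial
    obtain ⟨k, hk⟩ := Set.mem_iUnion.1 this
    exact hj k hk
  obtain ⟨k, hk⟩ := hex
  obtain ⟨-, A, c, hA⟩ := hC k
  obtain ⟨q, p, hq, hqp⟩ := aux_cramer A c
  have hs₀' : Tendsto s₀ atTop (𝓝[≠] 0) :=
    tendsto_nhdsWithin_iff.2 ⟨hs₀, Eventually.of_forall fun j => (hpos₀ j).ne'⟩
  have hqev : ∀ᶠ j in atTop, q.eval (s₀ j) ≠ 0 := by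
    have hfin : {x : ℝ | q.IsRoot x}.Finite := Polynomial.finite_setOfPred_isRoot hq
    have h1 : ∀ᶠ x in 𝓝[≠] (0 : ℝ), x ∉ {x : ℝ | q.IsRoot x} \ {0} := by
      have : ({x : ℝ | q.IsRoot x} \ {0})ᶜ ∈ 𝓝 (0 : ℝ) :=
        (hfin.subset Set.sdiff_subset).isClosed.isOpen_compl.mem_nhds (by simp)
      exact mem_nhdsWithin_of_mem_nhds this
    filter_upwards [hs₀'.eventually h1] with j hj h0
    exact hj ⟨h0, (hpos₀ j).ne'⟩
  obtain ⟨ψ, hψ, hψP⟩ := extraction_of_frequently_atTop (hk.and_eventually hqev)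
  let s : ℕ → ℝ := s₀ ∘ ψ
  let x : ℕ → Fin n → ℝ := x₀ ∘ ψ
  have hs : Tendsto s atTop (𝓝 0) := hs₀.comp hψ.tendsto_atTop
  have hpos : ∀ j, 0 < s j := fun j => hpos₀ _
  have hlt : ∀ j, s j < 1 := fun j => hlt₀ _
  have hx : ∀ j, g ((1 - s j) • x j) = x j := fun j => hx₀ _
  have hxA : ∀ j, x j = (1 - s j) • A.mulVec (x j) + c := by
    intro j
    have h1 := hA _ (hψP j).1
    rw [hx₀] at h1
    have h2 : A.mulVec ((1 - s j) • x j) = (1 - s j) • A.mulVec (x j) := Matrix.mulVec_smul _ _ _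
    rw [← h2]
    exact h1
  choose a b hab using fun i => aux_rational (p i) q hq s hs (fun j => (hpos j).ne')
    (fun j => s j * x j i) (fun j => hqp _ _ (hxA j) i) (fun j => (hψP j).2) ‖g 0‖
    (fun j => hbd₀ _ i)
  let r : ℕ → Fin n → ℝ := fun j i => (s j * x j i - a i) / s j - b i
  have hr : Tendsto r atTop (𝓝 0) := tendsto_pi_nhds.2 hab
  have hxr : ∀ j i, x j i = (s j)⁻¹ * a i + b i + r j i := by
    intro j i
    have := (hpos j).ne'
    simp only [r]
    field_simp
    ring
  let u : Fin n → ℝ := fun i => b i - a i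
  obtain ⟨p', q', T, hline⟩ := aux_line hpoly a u
  have ht : Tendsto (fun j => (s j)⁻¹) atTop atTop :=
    tendsto_inv_nhdsGT_zero.comp
      (tendsto_nhdsWithin_iff.2 ⟨hs, Eventually.of_forall fun j => hpos j⟩)
  -- the error of the half-line
  have herr : Tendsto (fun j => g (fun i => (s j)⁻¹ * a i + u i) - x j) atTop (𝓝 0) := by
    have h1 : Tendsto (fun j => s j • b - (1 - s j) • r j) atTop (𝓝 0) := by
      have := (hs.smul_const b).sub ((tendsto_const_nhds (x := (1 : ℝ)).sub hs).smul hr)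
      simpa using this
    refine squeeze_zero_norm (fun j => ?_) (tendsto_zero_iff_norm_tendsto_zero.1 h1)
    have h2 := hg.dist_le_mul (fun i => (s j)⁻¹ * a i + u i) ((1 - s j) • x j)
    rw [hx, NNReal.coe_one, one_mul, dist_eq_norm, dist_eq_norm] at h2
    refine h2.trans (le_of_eq ?_)
    congr 1
    ext i
    have := (hpos j).ne'
    simp only [Pi.sub_apply, Pi.smul_apply, smul_eq_mul, hxr, u]
    field_simp
    ring
  have hlim : ∀ i, Tendsto (fun j => (s j)⁻¹ * (p' i - a i) + (q' i - b i)) atTop (𝓝 0) := by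
    intro i
    have h1 := (tendsto_pi_nhds.1 (herr.add hr)) i
    rw [add_zero] at h1
    refine Tendsto.congr' ?_ h1
    filter_upwards [ht.eventually_ge_atTop T] with j hj
    simp only [Pi.add_apply, Pi.sub_apply]
    rw [hline _ hj, hxr]
    ring
  have hp' : ∀ i, p' i = a i := by
    intro i
    have h1 := hs.mul (hlim i)
    have h2 : Tendsto (fun j => (p' i - a i) + s j * (q' i - b i)) atTop
        (𝓝 ((p' i - a i) + 0 * (q' i - b i))) :=
      tendsto_const_nhds.add (hs.mul_const _)
    have h3 := tendsto_nhds_unique (h1.congr fun j => by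
      have := (hpos j).ne'
      field_simp) h2
    linarith
  have hq' : ∀ i, q' i = b i := by
    intro i
    have h1 := hlim i
    simp only [hp' i, sub_self, mul_zero, zero_add] at h1
    have := tendsto_nhds_unique h1 tendsto_const_nhds
    linarith
  refine ⟨a, u, T, fun t ht => ?_⟩
  rw [hline t ht]
  ext i
  simp only [hp', hq', u]
  ring
/-- Let `g : ℝⁿ → ℝⁿ` be polyhedral, convex, order-preserving and
additively homogeneous, let `η = χ(g)` be its cycle time (which exists), and let
`t ↦ tη + v` be a super-invariant half-line of `g`.  Define `ḡ : ℝⁿ → ℝⁿ` by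
`ḡ(y) = lim_{t→∞} (g(tη + y) − (t+1)η)` (this limit exists), and let `C` be the set of
critical nodes of `ḡ`.  Then there is a unique invariant half-line of `g` coinciding with
`t ↦ tη + v` on `C`, namely `t ↦ tη + z` where `z = lim_{k→∞} ḡ^k(v)`. -/
theorem unique_invariant_halfLine_through_superinvariant
    (n : ℕ) (g : (Fin n → ℝ) → (Fin n → ℝ))
    (hpoly : IsPolyhedralMap g)
    (hconv : ∀ i, ConvexOn ℝ Set.univ (fun x => g x i))
    (hop : ∀ x y : Fin n → ℝ, x ≤ y → g x ≤ g y)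
    (hah : ∀ (lam : ℝ) (x : Fin n → ℝ), g (fun i => lam + x i) = fun i => lam + g x i)
    (η : Fin n → ℝ)
    (hχ : ∀ y : Fin n → ℝ,
      Tendsto (fun k : ℕ => fun i => g^[k] y i / k) atTop (𝓝 η))
    (v : Fin n → ℝ) (T₀ : ℝ)
    (hsup : ∀ t ≥ T₀, g (fun i => t * η i + v i) ≤ fun i => (t + 1) * η i + v i)
    (gbar : (Fin n → ℝ) → (Fin n → ℝ))
    (hgbar : ∀ y : Fin n → ℝ,
      Tendsto (fun t : ℝ => fun i => g (fun j => t * η j + y j) i - (t + 1) * η i)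
        atTop (𝓝 (gbar y))) :
    ∃ z : Fin n → ℝ,
      Tendsto (fun k : ℕ => gbar^[k] v) atTop (𝓝 z) ∧
      (∃ T : ℝ, ∀ t ≥ T,
        g (fun i => t * η i + z i) = fun i => (t + 1) * η i + z i) ∧
      (∀ i : Fin n, IsCritical gbar i → z i = v i) ∧
      ∀ z' : Fin n → ℝ,
        (∃ T : ℝ, ∀ t ≥ T,
          g (fun i => t * η i + z' i) = fun i => (t + 1) * η i + z' i) →
        (∀ i : Fin n, IsCritical gbar i → z' i = v i) → z' = z := by
  have hg := aux_lip hop hah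
  have hglim : ∀ y i, Tendsto (fun t : ℝ => g (fun j => t * η j + y j) i - (t + 1) * η i)
        atTop (𝓝 (gbar y i)) := fun y i => tendsto_pi_nhds.1 (hgbar y) i
  -- properties of `gbar`
  have bop : ∀ x y : Fin n → ℝ, x ≤ y → gbar x ≤ gbar y := by
    intro x y hxy i
    refine le_of_tendsto_of_tendsto' (hglim x i) (hglim y i) fun t => ?_
    have := hop (fun j => t * η j + x j) (fun j => t * η j + y j)
      (fun j => add_le_add le_rfl (hxy j)) i
    linarith
  have bah : ∀ (lam : ℝ) (x : Fin n → ℝ), gbar (fun i => lam + x i) = fun i => lam + gbar x i := by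
    intro lam x
    ext i
    refine tendsto_nhds_unique (hglim _ i) (((hglim x i).const_add lam).congr fun t => ?_)
    have h1 : (fun j => t * η j + (lam + x j)) = fun j => lam + (t * η j + x j) := by
      ext j; ring
    rw [h1, hah]
    ring
  have bconv : ∀ i, ConvexOn ℝ Set.univ (fun x => gbar x i) := by
    intro i
    refine ⟨convex_univ, fun x _ y _ a b ha hb hab => ?_⟩
    simp only [smul_eq_mul]
    refine le_of_tendsto_of_tendsto' (hglim _ i)
      (((hglim x i).const_mul a).add ((hglim y i).const_mul b)) fun t => ?_
    have h1 := (hconv i).2 (Set.mem_univ (fun j => t * η j + x j))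
      (Set.mem_univ (fun j => t * η j + y j)) ha hb hab
    have h2 : (a • (fun j => t * η j + x j) + b • (fun j => t * η j + y j))
        = fun j => t * η j + (a • x + b • y) j := by
      ext j
      simp only [Pi.add_apply, Pi.smul_apply, smul_eq_mul]
      linear_combination (t * η j) * hab
    simp only [h2, smul_eq_mul] at h1
    have h3 : (t + 1) * η i = a * ((t + 1) * η i) + b * ((t + 1) * η i) := by
      linear_combination (-((t + 1) * η i)) * hab
    linarith
  have blip := aux_lip bop bah
  have bcont := blip.continuous
  -- invariant half-lines are fixed points of `gbar`
  have fix_of_inv : ∀ z : Fin n → ℝ, (∃ T : ℝ, ∀ t ≥ T,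
      g (fun i => t * η i + z i) = fun i => (t + 1) * η i + z i) → gbar z = z := by
    rintro z ⟨T, hT⟩
    ext i
    refine tendsto_nhds_unique (hglim z i) (tendsto_const_nhds.congr' ?_)
    filter_upwards [eventually_ge_atTop T] with t ht
    rw [hT t ht]
    ring
  have inv_of_fix : ∀ z : Fin n → ℝ, gbar z = z → ∃ T : ℝ, ∀ t ≥ T,
      g (fun i => t * η i + z i) = fun i => (t + 1) * η i + z i := by
    intro z hz
    obtain ⟨p, q, T, hT⟩ := aux_line hpoly η z
    have hl : ∀ i, Tendsto (fun t : ℝ => t * (p i - η i) + (q i - η i)) atTop (𝓝 (z i)) := by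
      intro i
      have h1 := hglim z i
      rw [hz] at h1
      refine h1.congr' ?_
      filter_upwards [eventually_ge_atTop T] with t ht
      rw [hT t ht]
      ring
    have hp : ∀ i, p i = η i := by
      intro i
      have h1 := tendsto_inv_atTop_zero.mul (hl i)
      have h2 : Tendsto (fun t : ℝ => (p i - η i) + t⁻¹ * (q i - η i)) atTop
          (𝓝 ((p i - η i) + 0 * (q i - η i))) :=
        tendsto_const_nhds.add (tendsto_inv_atTop_zero.mul_const _)
      have h3 := tendsto_nhds_unique (h1.congr' (by
        filter_upwards [eventually_gt_atTop 0] with t ht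
        have := ht.ne'
        rw [mul_add, ← mul_assoc, inv_mul_cancel₀ this, one_mul])) h2
      linarith
    have hq : ∀ i, q i = η i + z i := by
      intro i
      have h1 := hl i
      simp only [hp i, sub_self, mul_zero, zero_add] at h1
      have := tendsto_nhds_unique h1 tendsto_const_nhds
      linarith
    refine ⟨T, fun t ht => ?_⟩
    rw [hT t ht]
    ext i
    simp only [hp, hq]
    ring
  -- a fixed point of `gbar`
  obtain ⟨u, hu⟩ : ∃ u, gbar u = u := by
    obtain ⟨a, u, T, hT⟩ := aux_kohlberg hpoly hg
    have hit : ∀ k : ℕ, g^[k] (fun i => T * a i + u i) = fun i => (T + k) * a i + u i := by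
      intro k
      induction k with
      | zero => simp
      | succ k ih =>
        rw [Function.iterate_succ_apply', ih, hT (T + k) (by
          have : (0 : ℝ) ≤ k := by positivity
          linarith)]
        push_cast
        ext i
        ring
    have ha : a = η := by
      ext i
      have h1 := tendsto_pi_nhds.1 (hχ (fun i => T * a i + u i)) i
      have h2 : Tendsto (fun k : ℕ => a i + (T * a i + u i) / (k : ℝ)) atTop (𝓝 (a i + 0)) :=
        tendsto_const_nhds.add (tendsto_const_div_atTop_nhds_zero_nat _)
      rw [add_zero] at h2
      refine tendsto_nhds_unique (h2.congr' ?_) h1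
      filter_upwards [eventually_gt_atTop 0] with k hk
      have : (k : ℝ) ≠ 0 := by exact_mod_cast hk.ne'
      rw [hit]
      field_simp
      ring
    subst ha
    exact ⟨u, fix_of_inv u ⟨T, hT⟩⟩
  have hv : gbar v ≤ v := by
    intro i
    refine le_of_tendsto (hglim v i) ?_
    filter_upwards [eventually_ge_atTop T₀] with t ht
    have := hsup t ht i
    simp only at this
    linarith
  have hstep : ∀ k : ℕ, gbar (gbar^[k] v) ≤ gbar^[k] v := by
    intro k
    induction k with
    | zero => exact hv
    | succ k ih =>
      rw [Function.iterate_succ_apply']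
      exact bop _ _ ih
  have hanti : Antitone (fun k : ℕ => gbar^[k] v) := by
    apply antitone_nat_of_succ_le
    intro k
    rw [Function.iterate_succ_apply']
    exact hstep k
  have hlow : ∀ k : ℕ, (fun i => - dist v u + u i) ≤ gbar^[k] v := by
    intro k
    induction k with
    | zero =>
      intro i
      have := dist_le_pi_dist v u i
      rw [Real.dist_eq] at this
      have := (abs_le.1 this).1
      show - dist v u + u i ≤ v i
      linarith
    | succ k ih =>
      rw [Function.iterate_succ_apply']
      have := bop _ _ ih
      rw [bah, hu] at this
      exact this
  have hlimz : ∀ i, ∃ zi, Tendsto (fun k : ℕ => gbar^[k] v i) atTop (𝓝 zi) := by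
    intro i
    refine ⟨_, tendsto_atTop_ciInf (fun a b hab => hanti hab i) ⟨- dist v u + u i, ?_⟩⟩
    rintro _ ⟨k, rfl⟩
    exact hlow k i
  choose z hz using hlimz
  have hzlim : Tendsto (fun k : ℕ => gbar^[k] v) atTop (𝓝 z) := tendsto_pi_nhds.2 hz
  have hzfix : gbar z = z := by
    have h1 := (bcont.tendsto z).comp hzlim
    have h2 := (tendsto_add_atTop_iff_nat 1).2 hzlim
    refine tendsto_nhds_unique (h1.congr fun k => ?_) h2
    rw [Function.iterate_succ_apply']
    rfl
  have hzcrit : ∀ i : Fin n, IsCritical gbar i → z i = v i := by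
    intro i hi
    have : ∀ k : ℕ, gbar^[k] v i = v i := by
      intro k
      induction k with
      | zero => rfl
      | succ k ih =>
        rw [Function.iterate_succ_apply', aux_crit bop bah (hstep k) hi, ih]
    exact tendsto_nhds_unique (hz i) (tendsto_const_nhds.congr fun k => (this k).symm)
  refine ⟨z, hzlim, inv_of_fix z hzfix, hzcrit, fun z' hz' hz'c => ?_⟩
  have hz'fix := fix_of_inv z' hz'
  apply le_antisymm
  · exact aux_unique bop bah bconv hzfix hz'fix fun i hi => by rw [hz'c i hi, hzcrit i hi]
  · exact aux_unique bop bah bconv hz'fix hzfix fun i hi => by rw [hz'c i hi, hzcrit i hi]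
end
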